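/- arXiv:1705.03970 — 3 statements merged into one kernel-verified Lean document; each statement's English description precedes it below -/
import Mathlib

section
/- Let n ≥ 1, let N be a symmetric positive-definite n×n real matrix with eigenvalues 0 < λ_1 ≤ … ≤ λ_n, and let U, V be independent standard Gaussian random vectors on ℝⁿ. Then the law of U·NV has density s ↦ (2π)^{−1/2} ∫_{ℝⁿ} e^{−s²/(2κ(x)²)} κ(x)^{−1} d𝒩(x) with respect to Lebesgue measure on ℝ. -/
open MeasureTheory ProbabilityTheory Matrix Real
open scoped ENNReal

/-- The standard Gaussian measure on `ι → ℝ`: the centered Gaussian measure with identity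
covariance, i.e. the product of copies of `N(0,1)`. -/
noncomputable def stdGaussian (ι : Type*) [Fintype ι] : Measure (ι → ℝ) :=
  Measure.pi fun _ => gaussianReal 0 1

lemma map_dot_stdGaussian {n : ℕ} (w : Fin n → ℝ) :
    (stdGaussian (Fin n)).map (fun u => u ⬝ᵥ w) =
      gaussianReal 0 (Real.toNNReal (∑ i, w i ^ 2)) := by
  have : IsProbabilityMeasure ((stdGaussian (Fin n))) := by
    unfold _root_.stdGaussian; infer_instance
  have hm : Measurable (fun u : Fin n → ℝ => u ⬝ᵥ w) := by
    unfold dotProduct; fun_prop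
  have : IsProbabilityMeasure ((stdGaussian (Fin n)).map (fun u => u ⬝ᵥ w)) :=
    Measure.isProbabilityMeasure_map hm.aemeasurable
  apply Measure.ext_of_charFun
  ext t
  rw [charFun_gaussianReal, charFun_apply_real, integral_map hm.aemeasurable (by fun_prop)]
  have h1 : ∀ u : Fin n → ℝ, Complex.exp (t * ((u ⬝ᵥ w : ℝ) : ℂ) * Complex.I) =
      ∏ i, Complex.exp (((t * w i : ℝ) : ℂ) * (u i : ℂ) * Complex.I) := by
    intro u
    rw [← Complex.exp_sum]
    congr 1
    simp only [dotProduct]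
    push_cast
    rw [Finset.mul_sum, Finset.sum_mul]
    exact Finset.sum_congr rfl fun i _ => by ring
  simp_rw [h1]
  unfold _root_.stdGaussian
  rw [integral_fintype_prod_eq_prod
    (f := fun i (x : ℝ) => Complex.exp (((t * w i : ℝ) : ℂ) * (x : ℂ) * Complex.I))]
  simp_rw [← charFun_apply_real, charFun_gaussianReal]
  rw [← Complex.exp_sum]
  congr 1
  rw [Real.coe_toNNReal _ (Finset.sum_nonneg fun i _ => sq_nonneg _)]
  push_cast
  simp only [mul_zero, zero_mul, zero_sub, Finset.sum_neg_distrib, Finset.sum_mul, Finset.sum_div]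
  congr 1
  refine Finset.sum_congr rfl fun i _ => ?_
  simp
  ring

lemma quad_eq {n : ℕ} (N : Matrix (Fin n) (Fin n) ℝ) (hN : N.PosDef) (x : Fin n → ℝ) :
    x ⬝ᵥ (N * N) *ᵥ x = ∑ i, (N *ᵥ x) i ^ 2 := by
  have hs : Nᵀ = N := by
    have := hN.isHermitian
    simpa [Matrix.IsHermitian, conjTranspose_eq_transpose_of_trivial] using this
  rw [← Matrix.mulVec_mulVec, Matrix.dotProduct_mulVec, ← Matrix.mulVec_transpose, hs]
  simp [dotProduct, sq]

lemma quad_pos {n : ℕ} (N : Matrix (Fin n) (Fin n) ℝ) (hN : N.PosDef) (x : Fin n → ℝ)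
    (hx : x ≠ 0) : 0 < x ⬝ᵥ (N * N) *ᵥ x := by
  rw [quad_eq N hN]
  have h0 : N *ᵥ x ≠ 0 := by
    intro h
    have hinj := Matrix.mulVec_injective_iff_isUnit.mpr hN.isUnit
    exact hx (hinj (by simpa using h))
  obtain ⟨i, hi⟩ := Function.ne_iff.mp h0
  exact Finset.sum_pos' (fun i _ => sq_nonneg _) ⟨i, Finset.mem_univ _, by
    simp only [Pi.zero_apply] at hi; positivity⟩

lemma pdf_eq (q : ℝ) (hq : 0 ≤ q) (s : ℝ) :
    gaussianPDFReal 0 q.toNNReal s =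
      (2 * π) ^ (-(1 : ℝ) / 2) * (Real.exp (-s ^ 2 / (2 * √q ^ 2)) * (√q)⁻¹) := by
  rw [gaussianPDFReal, Real.coe_toNNReal _ hq, Real.sq_sqrt hq, sub_zero,
    Real.sqrt_mul (by positivity), neg_div, neg_div 2 (1 : ℝ), Real.rpow_neg (by positivity), ← Real.sqrt_eq_rpow,
    mul_inv]
  ring

/-- Let `n ≥ 1`, let `N` be a symmetric positive-definite `n×n` real
matrix with eigenvalues `0 < λ₁ ≤ … ≤ λ_n`, and let `U, V` be independent standard
Gaussian random vectors on `ℝⁿ`.  Then the law of `U·NV` has density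
`s ↦ (2π)^{−1/2} ∫ e^{−s²/(2κ(x)²)} κ(x)^{−1} d𝒩(x)` w.r.t. Lebesgue measure on `ℝ`.
Here `κ(x) = (Σ_j λ_j² x_j²)^{1/2}` (in an orthonormal eigenbasis of `N`), which, as a
basis-independent quadratic expression, equals `(x·N²x)^{1/2}`. -/
theorem stmt_2 {Ω : Type*} [MeasurableSpace Ω] (P : Measure Ω) [IsProbabilityMeasure P]
    (n : ℕ) (hn : 1 ≤ n) (N : Matrix (Fin n) (Fin n) ℝ) (hN : N.PosDef)
    (U V : Ω → (Fin n → ℝ)) (hU : Measurable U) (hV : Measurable V)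
    (hUlaw : P.map U = stdGaussian (Fin n)) (hVlaw : P.map V = stdGaussian (Fin n))
    (hUV : IndepFun U V P) :
    P.map (fun ω => U ω ⬝ᵥ N *ᵥ V ω) =
      (volume : Measure ℝ).withDensity (fun s => ENNReal.ofReal
        ((2 * π) ^ (-(1 : ℝ) / 2) *
          ∫ x, Real.exp (-s ^ 2 / (2 * Real.sqrt (x ⬝ᵥ (N * N) *ᵥ x) ^ 2)) *
            (Real.sqrt (x ⬝ᵥ (N * N) *ᵥ x))⁻¹ ∂(stdGaussian (Fin n)))) := by
  have hprob : IsProbabilityMeasure ((stdGaussian (Fin n))) := by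
    unfold _root_.stdGaussian; infer_instance
  set γ := (stdGaussian (Fin n)) with hγ
  have hq0 : ∀ x : Fin n → ℝ, 0 ≤ x ⬝ᵥ (N * N) *ᵥ x := fun x => by
    rw [quad_eq N hN]; exact Finset.sum_nonneg fun i _ => sq_nonneg _
  have hne : ∀ᵐ x ∂γ, x ≠ 0 := by
    have : Nonempty (Fin n) := ⟨⟨0, hn⟩⟩
    have := nullSingletonClass_gaussianReal (μ := 0) (v := 1) one_ne_zero
    rw [hγ]
    unfold _root_.stdGaussian
    simp [ae_iff]
  have hqm : Measurable (fun x : Fin n → ℝ => x ⬝ᵥ (N * N) *ᵥ x) := by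
    apply Continuous.measurable; fun_prop
  have hpm : Measurable (fun p : ℝ × (Fin n → ℝ) =>
      gaussianPDF 0 (p.2 ⬝ᵥ (N * N) *ᵥ p.2).toNNReal p.1) := by
    have := measurable_uncurry_gaussianPDF.comp
      (Measurable.prodMk (measurable_const (a := (0 : ℝ)))
        (Measurable.prodMk ((hqm.comp measurable_snd).real_toNNReal) measurable_fst) :
        Measurable (fun p : ℝ × (Fin n → ℝ) => _))
    exact this
  have hdm : Measurable (fun p : (Fin n → ℝ) × (Fin n → ℝ) => p.1 ⬝ᵥ N *ᵥ p.2) := by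
    apply Continuous.measurable; fun_prop
  -- the law of the pair
  have hpair : P.map (fun ω => (U ω, V ω)) = γ.prod γ := by
    rw [(indepFun_iff_map_prod_eq_prod_map_map hU.aemeasurable hV.aemeasurable).mp hUV,
      hUlaw, hVlaw]
  have hlaw : P.map (fun ω => U ω ⬝ᵥ N *ᵥ V ω) =
      (volume : Measure ℝ).withDensity (fun s =>
        ∫⁻ x, gaussianPDF 0 (x ⬝ᵥ (N * N) *ᵥ x).toNNReal s ∂γ) := by
    have hcomp : P.map (fun ω => U ω ⬝ᵥ N *ᵥ V ω) =
        (γ.prod γ).map (fun p => p.1 ⬝ᵥ N *ᵥ p.2) := by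
      rw [← hpair, Measure.map_map hdm (hU.prodMk hV)]
      rfl
    rw [hcomp]
    ext A hA
    rw [Measure.map_apply hdm hA, Measure.prod_apply_symm (hdm hA), withDensity_apply _ hA,
      lintegral_lintegral_swap hpm.aemeasurable]
    refine lintegral_congr_ae ?_
    filter_upwards [hne] with x hx
    have hv : (x ⬝ᵥ (N * N) *ᵥ x).toNNReal ≠ 0 := by
      simpa using quad_pos N hN x hx
    rw [← gaussianReal_apply 0 hv, quad_eq N hN, ← map_dot_stdGaussian,
      Measure.map_apply (by apply Continuous.measurable; fun_prop) hA]
    rfl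
  have : IsProbabilityMeasure (P.map (fun ω => U ω ⬝ᵥ N *ᵥ V ω)) :=
    Measure.isProbabilityMeasure_map (hdm.comp (hU.prodMk hV)).aemeasurable
  have hfin : ∫⁻ s, ∫⁻ x, gaussianPDF 0 (x ⬝ᵥ (N * N) *ᵥ x).toNNReal s ∂γ ≠ ∞ := by
    have h := measure_ne_top (P.map (fun ω => U ω ⬝ᵥ N *ᵥ V ω)) Set.univ
    rw [hlaw, withDensity_apply _ MeasurableSet.univ, Measure.restrict_univ] at h
    exact h
  rw [hlaw]
  refine withDensity_congr_ae ?_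
  filter_upwards [ae_lt_top hpm.lintegral_prod_right' hfin] with s hs
  rw [← integral_const_mul]
  simp_rw [← pdf_eq _ (hq0 _)]
  have hms : Measurable (fun x : Fin n → ℝ =>
      gaussianPDFReal 0 (x ⬝ᵥ (N * N) *ᵥ x).toNNReal s) := by
    have := measurable_uncurry_gaussianPDFReal.comp
      (Measurable.prodMk (measurable_const (a := (0 : ℝ)))
        (Measurable.prodMk hqm.real_toNNReal (measurable_const (a := s))) :
        Measurable (fun x : Fin n → ℝ => _))
    exact this
  rw [integral_eq_lintegral_of_nonneg_ae (ae_of_all _ fun x => gaussianPDFReal_nonneg _ _ _)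
    hms.aestronglyMeasurable]
  exact (ENNReal.ofReal_toReal hs.ne).symm
end

section
/- Let n ≥ 1, λ > 0, and let U, V be independent standard Gaussian random vectors on ℝⁿ. Then the law of λ U·V has density f(s) = |S^{n−1}| K_{(n−1)/2}(|s|/λ) |s|^{(n−1)/2} / (2πλ)^{(n+1)/2}, where |S^{n−1}| = 2π^{n/2}/Γ(n/2) is the surface area of the unit sphere in ℝⁿ. -/
open MeasureTheory ProbabilityTheory Matrix Real
open scoped ENNReal

/-- The modified Bessel function of the second kind:
`K_ν(z) = ∫_0^∞ e^{−z cosh t} cosh(νt) dt` (for real `ν` and `z > 0`). -/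
noncomputable def besselK (ν z : ℝ) : ℝ :=
  ∫ t in Set.Ioi (0 : ℝ), Real.exp (-(z * Real.cosh t)) * Real.cosh (ν * t)


lemma aux_law {n : ℕ} (lam : ℝ) (v : Fin n → ℝ) :
    (Measure.pi fun _ : Fin n => gaussianReal 0 1).map (fun u => lam * (u ⬝ᵥ v)) =
      gaussianReal 0 (Real.toNNReal (lam ^ 2 * ∑ i, v i ^ 2)) := by
  have hm : Measurable (fun u : Fin n → ℝ => lam * (u ⬝ᵥ v)) := by
    unfold dotProduct; fun_prop
  have : IsProbabilityMeasure ((Measure.pi fun _ : Fin n => gaussianReal 0 1).map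
      (fun u => lam * (u ⬝ᵥ v))) := Measure.isProbabilityMeasure_map hm.aemeasurable
  apply Measure.ext_of_charFun
  ext t
  rw [charFun_apply_real, integral_map hm.aemeasurable (by fun_prop), charFun_gaussianReal]
  have h1 : ∀ u : Fin n → ℝ, Complex.exp (t * ((lam * (u ⬝ᵥ v) : ℝ) : ℂ) * Complex.I) =
      ∏ i, Complex.exp (((t * lam * v i : ℝ) : ℂ) * (u i : ℂ) * Complex.I) := by
    intro u
    rw [← Complex.exp_sum]
    congr 1
    simp only [dotProduct]
    push_cast
    rw [Finset.mul_sum, Finset.mul_sum, Finset.sum_mul]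
    refine Finset.sum_congr rfl fun i _ => by ring
  simp_rw [h1]
  rw [integral_fintype_prod_eq_prod
    (f := fun (i : Fin n) (x : ℝ) => Complex.exp (((t * lam * v i : ℝ) : ℂ) * (x : ℂ) * Complex.I))]
  simp_rw [← charFun_apply_real, charFun_gaussianReal]
  rw [← Complex.exp_sum]
  congr 1
  have h2 : ((Real.toNNReal (lam ^ 2 * ∑ i, v i ^ 2) : NNReal) : ℝ) = lam ^ 2 * ∑ i, v i ^ 2 :=
    Real.coe_toNNReal _ (by positivity)
  rw [h2]
  push_cast
  simp only [mul_zero, zero_mul, zero_sub, Finset.sum_neg_distrib, one_mul]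
  rw [Finset.mul_sum, Finset.sum_mul, Finset.sum_div]
  congr 1
  refine Finset.sum_congr rfl fun i _ => by ring

lemma aux_density (n : ℕ) :
    (Measure.pi fun _ : Fin n => gaussianReal 0 1) =
      (volume : Measure (Fin n → ℝ)).withDensity
        (fun v => ENNReal.ofReal (∏ i, gaussianPDFReal 0 1 (v i))) := by
  apply Measure.pi_eq
  intro s hs
  rw [withDensity_apply _ (MeasurableSet.univ_pi hs), volume_pi, Measure.restrict_pi_pi]
  rw [← ofReal_integral_eq_lintegral_ofReal]
  · rw [integral_fintype_prod_eq_prod (f := fun (_ : Fin n) (x : ℝ) => gaussianPDFReal 0 1 x),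
      ENNReal.ofReal_prod_of_nonneg]
    · refine Finset.prod_congr rfl fun i _ => ?_
      rw [gaussianReal_apply_eq_integral _ one_ne_zero]
    · intro i _
      exact integral_nonneg fun x => gaussianPDFReal_nonneg _ _ _
  · exact Integrable.fintype_prod (f := fun (_ : Fin n) (x : ℝ) => gaussianPDFReal 0 1 x)
      fun i => (integrable_gaussianPDFReal 0 1).restrict
  · exact Filter.Eventually.of_forall fun v => Finset.prod_nonneg fun i _ =>
      gaussianPDFReal_nonneg _ _ _

lemma aux_pdf_prod (n : ℕ) (v : Fin n → ℝ) :
    ∏ i, gaussianPDFReal 0 1 (v i) =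
      (2 * π) ^ (-((n : ℝ) / 2)) * Real.exp (-(∑ i, v i ^ 2) / 2) := by
  simp only [gaussianPDFReal, sub_zero, NNReal.coe_one, mul_one]
  rw [Finset.prod_mul_distrib, ← Real.exp_sum]
  congr 1
  · simp only [Finset.prod_const, Finset.card_univ, Fintype.card_fin]
    rw [Real.sqrt_eq_rpow, ← Real.rpow_neg (by positivity), ← Real.rpow_natCast, ← Real.rpow_mul (by positivity)]
    congr 1; ring
  · rw [neg_div, Finset.sum_div, ← Finset.sum_neg_distrib]
    congr 1; refine Finset.sum_congr rfl fun i _ => by ring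

open Set in
lemma aux_polar {E : Type*} [NormedAddCommGroup E] [NormedSpace ℝ E] [MeasurableSpace E]
    [Nontrivial E] (μ : Measure E) [FiniteDimensional ℝ E] [BorelSpace E] [μ.IsAddHaarMeasure]
    (f : ℝ → ℝ≥0∞) (hf : Measurable f) :
    ∫⁻ x, f ‖x‖ ∂μ = (Module.finrank ℝ E * μ (Metric.ball 0 1)) *
      ∫⁻ y in Ioi (0 : ℝ), ENNReal.ofReal (y ^ (Module.finrank ℝ E - 1)) * f y :=
  calc
    ∫⁻ x, f (‖x‖) ∂μ = ∫⁻ x : ({(0)}ᶜ : Set E), f (‖x.1‖) ∂(μ.comap (↑)) := by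
      rw [lintegral_subtype_comap (measurableSet_singleton _).compl fun x ↦ f (‖x‖),
        restrict_compl_singleton]
    _ = ∫⁻ x, f x.2 ∂μ.toSphere.prod (.volumeIoiPow (Module.finrank ℝ E - 1)) := by
      simpa using μ.measurePreserving_homeomorphUnitSphereProd.lintegral_comp_emb
        (Homeomorph.measurableEmbedding _) (f ∘ Subtype.val ∘ Prod.snd)
    _ = μ.toSphere univ * ∫⁻ x : Ioi (0 : ℝ), f x ∂.volumeIoiPow (Module.finrank ℝ E - 1) := by
      rw [lintegral_prod _ (by fun_prop)]
      simp only [lintegral_const]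
      rw [mul_comm]
    _ = _ := by
      simp only [Measure.volumeIoiPow]
      rw [lintegral_withDensity_eq_lintegral_mul _ (by fun_prop) (by fun_prop), μ.toSphere_apply_univ]
      congr 1
      exact lintegral_subtype_comap measurableSet_Ioi
        (fun y => ENNReal.ofReal (y ^ (Module.finrank ℝ E - 1)) * f y)

lemma aux_radial (n : ℕ) (hn : 1 ≤ n) (f : ℝ → ℝ≥0∞) (hf : Measurable f) :
    ∫⁻ v, f (∑ i, v i ^ 2) ∂(Measure.pi fun _ : Fin n => gaussianReal 0 1) =
      ENNReal.ofReal (2 * π ^ ((n : ℝ) / 2) / Real.Gamma ((n : ℝ) / 2)) *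
      ∫⁻ r in Set.Ioi (0 : ℝ), ENNReal.ofReal (r ^ (n - 1)) *
        (ENNReal.ofReal ((2 * π) ^ (-((n : ℝ) / 2)) * Real.exp (-r ^ 2 / 2)) * f (r ^ 2)) := by
  have : Nonempty (Fin n) := ⟨⟨0, hn⟩⟩
  have hn' : (0 : ℝ) < n := by exact_mod_cast hn
  rw [aux_density]
  simp_rw [aux_pdf_prod]
  rw [lintegral_withDensity_eq_lintegral_mul _ (by fun_prop) (by fun_prop)]
  have h1 := (PiLp.volume_preserving_toLp (Fin n)).lintegral_comp_emb
    (MeasurableEquiv.toLp 2 (Fin n → ℝ)).measurableEmbedding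
    (fun x : EuclideanSpace ℝ (Fin n) => ENNReal.ofReal ((2 * π) ^ (-((n : ℝ) / 2)) *
      Real.exp (-‖x‖ ^ 2 / 2)) * f (‖x‖ ^ 2))
  simp only [EuclideanSpace.norm_sq_eq, Real.norm_eq_abs, sq_abs] at h1
  simp only [Pi.mul_apply]
  rw [h1]
  have h2 := aux_polar (volume : Measure (EuclideanSpace ℝ (Fin n)))
    (fun r => ENNReal.ofReal ((2 * π) ^ (-((n : ℝ) / 2)) *
      Real.exp (-r ^ 2 / 2)) * f (r ^ 2)) (by fun_prop)
  simp only [EuclideanSpace.norm_sq_eq, Real.norm_eq_abs, sq_abs] at h2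
  rw [h2, EuclideanSpace.volume_ball]
  simp only [finrank_euclideanSpace, Fintype.card_fin, ENNReal.ofReal_one, one_pow, one_mul]
  congr 1
  rw [← ENNReal.ofReal_natCast, ← ENNReal.ofReal_mul (by positivity)]
  congr 1
  rw [Real.Gamma_add_one (by positivity), Real.sqrt_eq_rpow, ← Real.rpow_natCast,
    ← Real.rpow_mul (by positivity), show 1 / 2 * (n : ℝ) = n / 2 by ring]
  have := Real.Gamma_pos_of_pos (show (0 : ℝ) < n / 2 by positivity)
  field_simp

lemma aux_integrable (ν a : ℝ) (ha : 0 < a) :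
    Integrable (fun t : ℝ => Real.exp (ν * t) * Real.exp (-(a * Real.cosh t))) := by
  have hb : Integrable (fun t : ℝ => Real.exp (2 * ν ^ 2 / a) * Real.exp (-(a / 8) * t ^ 2)) :=
    (integrable_exp_neg_mul_sq (by positivity)).const_mul _
  refine hb.mono' (by fun_prop) (Filter.Eventually.of_forall fun t => ?_)
  rw [Real.norm_of_nonneg (by positivity), ← Real.exp_add, ← Real.exp_add, Real.exp_le_exp]
  have h1 : t ^ 2 / 4 ≤ Real.cosh t := by
    rw [← Real.cosh_abs, Real.cosh_eq]
    have := Real.quadratic_le_exp_of_nonneg (abs_nonneg t)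
    have h3 := Real.exp_pos (-|t|)
    have h4 := abs_nonneg t
    have h5 := sq_abs t
    linarith
  have h2 : a * (t ^ 2 / 4) ≤ a * Real.cosh t := by gcongr
  have h3 : 0 ≤ 2 / a * (ν - a / 4 * t) ^ 2 := by positivity
  have h4 : 2 / a * (ν - a / 4 * t) ^ 2 = 2 * ν ^ 2 / a - ν * t + a / 8 * t ^ 2 := by
    field_simp; ring
  linarith

lemma aux_bessel (ν a : ℝ) (ha : 0 < a) :
    ∫ t : ℝ, Real.exp (ν * t) * Real.exp (-(a * Real.cosh t)) = 2 * besselK ν a := by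
  have hi := aux_integrable ν a ha
  rw [← intervalIntegral.integral_Iic_add_Ioi (b := 0) hi.integrableOn hi.integrableOn]
  have h1 := integral_comp_neg_Ioi (0 : ℝ)
    (fun t : ℝ => Real.exp (ν * t) * Real.exp (-(a * Real.cosh t)))
  rw [neg_zero] at h1
  rw [← h1, ← integral_add hi.comp_neg.integrableOn hi.integrableOn, besselK,
    ← integral_const_mul]
  congr 1
  ext t
  rw [Real.cosh_neg, Real.cosh_eq (ν * t), mul_neg]
  ring

lemma aux_subst (n : ℕ) (hn : 1 ≤ n) (a : ℝ) (ha : 0 < a) :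
    ∫⁻ r in Set.Ioi (0 : ℝ), ENNReal.ofReal
        (r ^ (n - 1) * (r⁻¹ * Real.exp (-(r ^ 2 / 2 + a ^ 2 / (2 * r ^ 2))))) =
      ENNReal.ofReal (a ^ (((n : ℝ) - 1) / 2) * besselK (((n : ℝ) - 1) / 2) a) := by
  set ν : ℝ := ((n : ℝ) - 1) / 2 with hν
  have himg : (fun t : ℝ => √a * Real.exp (t / 2)) '' Set.univ = Set.Ioi 0 := by
    ext r
    simp only [Set.image_univ, Set.mem_range, Set.mem_Ioi]
    constructor
    · rintro ⟨t, rfl⟩; positivity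
    · intro hr
      refine ⟨2 * Real.log (r / √a), ?_⟩
      rw [mul_div_cancel_left₀ _ two_ne_zero, Real.exp_log (by positivity)]
      field_simp
  have hinj : Set.InjOn (fun t : ℝ => √a * Real.exp (t / 2)) Set.univ := by
    intro x _ y _ h
    have h' := mul_left_cancel₀ (by positivity) h
    have := Real.exp_injective h'
    linarith
  have hder : ∀ t ∈ (Set.univ : Set ℝ), HasDerivWithinAt (fun t : ℝ => √a * Real.exp (t / 2))
      (√a * (Real.exp (t / 2) * (1 / 2))) Set.univ t := by
    intro t _
    exact ((((hasDerivAt_id t).div_const 2).exp).const_mul _).hasDerivWithinAt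
  rw [← himg, lintegral_image_eq_lintegral_abs_deriv_mul MeasurableSet.univ hder hinj,
    Measure.restrict_univ]
  have hint : ∀ t : ℝ, ENNReal.ofReal |√a * (Real.exp (t / 2) * (1 / 2))| * ENNReal.ofReal
      ((√a * Real.exp (t / 2)) ^ (n - 1) * ((√a * Real.exp (t / 2))⁻¹ *
        Real.exp (-((√a * Real.exp (t / 2)) ^ 2 / 2 +
          a ^ 2 / (2 * (√a * Real.exp (t / 2)) ^ 2))))) =
      ENNReal.ofReal (a ^ ν / 2 * (Real.exp (ν * t) * Real.exp (-(a * Real.cosh t)))) := by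
    intro t
    rw [abs_of_pos (by positivity), ← ENNReal.ofReal_mul (by positivity)]
    congr 1
    have e1 : (√a * Real.exp (t / 2)) ^ 2 = a * Real.exp t := by
      rw [mul_pow, Real.sq_sqrt ha.le, ← Real.exp_nat_mul]
      congr 2; push_cast; ring
    have e2 : (√a * Real.exp (t / 2)) ^ (n - 1) = a ^ ν * Real.exp (ν * t) := by
      rw [mul_pow, Real.sqrt_eq_rpow, ← Real.rpow_natCast (a ^ _), ← Real.rpow_mul ha.le,
        ← Real.exp_nat_mul, Nat.cast_sub hn]
      congr 2
      · rw [hν]; push_cast; ring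
      · rw [hν]; push_cast; ring
    have e3 : a * Real.exp t / 2 + a ^ 2 / (2 * (a * Real.exp t)) = a * Real.cosh t := by
      rw [Real.cosh_eq, Real.exp_neg]
      field_simp
    rw [e1, e2, e3]
    have : √a * Real.exp (t / 2) ≠ 0 := by positivity
    field_simp
  simp_rw [hint]
  rw [← ofReal_integral_eq_lintegral_ofReal ((aux_integrable ν a ha).const_mul _)
    (Filter.Eventually.of_forall fun t => by positivity), integral_const_mul, aux_bessel ν a ha]
  congr 1
  ring

lemma aux_pointwise (n : ℕ) (hn : 1 ≤ n) (lam : ℝ) (hlam : 0 < lam) (s : ℝ) (hs : s ≠ 0) :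
    ENNReal.ofReal (2 * π ^ ((n : ℝ) / 2) / Real.Gamma ((n : ℝ) / 2)) *
      ∫⁻ r in Set.Ioi (0 : ℝ), ENNReal.ofReal (r ^ (n - 1)) *
        (ENNReal.ofReal ((2 * π) ^ (-((n : ℝ) / 2)) * Real.exp (-r ^ 2 / 2)) *
          gaussianPDF 0 (Real.toNNReal (lam ^ 2 * r ^ 2)) s) =
    ENNReal.ofReal
        ((2 * π ^ ((n : ℝ) / 2) / Real.Gamma ((n : ℝ) / 2)) *
          besselK (((n : ℝ) - 1) / 2) (|s| / lam) *
          |s| ^ (((n : ℝ) - 1) / 2) / (2 * π * lam) ^ (((n : ℝ) + 1) / 2)) := by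
  have hs' : 0 < |s| := abs_pos.mpr hs
  have hn' : (0 : ℝ) < n := by exact_mod_cast hn
  have hG := Real.Gamma_pos_of_pos (show (0 : ℝ) < n / 2 by positivity)
  set a := |s| / lam with ha
  have hapos : 0 < a := by positivity
  have h1 : ∀ r ∈ Set.Ioi (0 : ℝ), ENNReal.ofReal (r ^ (n - 1)) *
        (ENNReal.ofReal ((2 * π) ^ (-((n : ℝ) / 2)) * Real.exp (-r ^ 2 / 2)) *
          gaussianPDF 0 (Real.toNNReal (lam ^ 2 * r ^ 2)) s) =
      ENNReal.ofReal ((2 * π) ^ (-(((n : ℝ) + 1) / 2)) * lam⁻¹) * ENNReal.ofReal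
        (r ^ (n - 1) * (r⁻¹ * Real.exp (-(r ^ 2 / 2 + a ^ 2 / (2 * r ^ 2))))) := by
    intro r hr
    have hr : 0 < r := hr
    rw [gaussianPDF, ← ENNReal.ofReal_mul (by positivity), ← ENNReal.ofReal_mul (by positivity),
      ← ENNReal.ofReal_mul (by positivity)]
    congr 1
    rw [gaussianPDFReal, Real.coe_toNNReal _ (by positivity), sub_zero]
    have e1 : √(2 * π * (lam ^ 2 * r ^ 2)) = (2 * π) ^ ((1 : ℝ) / 2) * (lam * r) := by
      rw [← mul_pow, Real.sqrt_mul (by positivity), Real.sqrt_sq (by positivity),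
        Real.sqrt_eq_rpow]
    have e2 : (2 * π) ^ (-(((n : ℝ) + 1) / 2)) =
        (2 * π) ^ (-((n : ℝ) / 2)) * ((2 * π) ^ ((1 : ℝ) / 2))⁻¹ := by
      rw [← Real.rpow_neg (by positivity), ← Real.rpow_add (by positivity)]
      congr 1; ring
    have e3 : Real.exp (-(r ^ 2 / 2 + a ^ 2 / (2 * r ^ 2))) =
        Real.exp (-r ^ 2 / 2) * Real.exp (-s ^ 2 / (2 * (lam ^ 2 * r ^ 2))) := by
      rw [← Real.exp_add, ha, div_pow, sq_abs]
      congr 1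
      field_simp
      ring
    rw [e1, e2, e3, mul_inv, mul_inv]
    ring
  rw [setLIntegral_congr_fun measurableSet_Ioi h1, lintegral_const_mul _ (by fun_prop),
    aux_subst n hn a hapos, ← ENNReal.ofReal_mul (by positivity),
    ← ENNReal.ofReal_mul (by positivity)]
  congr 1
  have e4 : a ^ (((n : ℝ) - 1) / 2) = |s| ^ (((n : ℝ) - 1) / 2) / lam ^ (((n : ℝ) - 1) / 2) := by
    rw [ha, Real.div_rpow (by positivity) (by positivity)]
  have e5 : (2 * π * lam) ^ (((n : ℝ) + 1) / 2) =
      (2 * π) ^ (((n : ℝ) + 1) / 2) * (lam ^ (((n : ℝ) - 1) / 2) * lam) := by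
    rw [Real.mul_rpow (by positivity) (by positivity), ← Real.rpow_add_one (by positivity)]
    congr 2; ring
  rw [e4, e5, Real.rpow_neg (by positivity)]
  field_simp

/-- Let `n ≥ 1`, `λ > 0`, and let `U, V` be independent standard Gaussian
random vectors on `ℝⁿ`.  Then the law of `λ U·V` has density
`f(s) = |S^{n−1}| K_{(n−1)/2}(|s|/λ) |s|^{(n−1)/2} / (2πλ)^{(n+1)/2}`, where
`|S^{n−1}| = 2π^{n/2}/Γ(n/2)`. -/
theorem stmt_3 {Ω : Type*} [MeasurableSpace Ω] (P : Measure Ω) [IsProbabilityMeasure P]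
    (n : ℕ) (hn : 1 ≤ n) (lam : ℝ) (hlam : 0 < lam)
    (U V : Ω → (Fin n → ℝ)) (hU : Measurable U) (hV : Measurable V)
    (hUlaw : P.map U = stdGaussian (Fin n)) (hVlaw : P.map V = stdGaussian (Fin n))
    (hUV : IndepFun U V P) :
    P.map (fun ω => lam * (U ω ⬝ᵥ V ω)) =
      (volume : Measure ℝ).withDensity (fun s => ENNReal.ofReal
        ((2 * π ^ ((n : ℝ) / 2) / Real.Gamma ((n : ℝ) / 2)) *
          besselK (((n : ℝ) - 1) / 2) (|s| / lam) *
          |s| ^ (((n : ℝ) - 1) / 2) / (2 * π * lam) ^ (((n : ℝ) + 1) / 2))) := by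
  have hn' : (0 : ℝ) < n := by exact_mod_cast hn
  have hdm : Measurable (fun p : (Fin n → ℝ) × (Fin n → ℝ) => lam * (p.1 ⬝ᵥ p.2)) := by
    unfold dotProduct; fun_prop
  have hprod : P.map (fun ω => (U ω, V ω)) =
      (Measure.pi fun _ : Fin n => gaussianReal 0 1).prod
        (Measure.pi fun _ : Fin n => gaussianReal 0 1) := by
    rw [(indepFun_iff_map_prod_eq_prod_map_map hU.aemeasurable hV.aemeasurable).mp hUV,
      hUlaw, hVlaw]
    rfl
  have hmap : P.map (fun ω => lam * (U ω ⬝ᵥ V ω)) =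
      ((Measure.pi fun _ : Fin n => gaussianReal 0 1).prod
        (Measure.pi fun _ : Fin n => gaussianReal 0 1)).map
        (fun p : (Fin n → ℝ) × (Fin n → ℝ) => lam * (p.1 ⬝ᵥ p.2)) := by
    rw [← hprod, Measure.map_map hdm (hU.prodMk hV)]
    rfl
  rw [hmap]
  ext A hA
  have hfm : Measurable (fun q : ℝ => gaussianReal 0 (Real.toNNReal (lam ^ 2 * q)) A) := by
    have h := (Measure.measurable_coe hA).comp measurable_gaussianReal
    exact h.comp (f := fun q : ℝ => ((0 : ℝ), Real.toNNReal (lam ^ 2 * q))) (by fun_prop)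
  have hpm : Measurable (fun p : ℝ × ℝ =>
      gaussianPDF 0 (Real.toNNReal (lam ^ 2 * p.1 ^ 2)) p.2) :=
    measurable_uncurry_gaussianPDF.comp
      (f := fun p : ℝ × ℝ => ((0 : ℝ), Real.toNNReal (lam ^ 2 * p.1 ^ 2), p.2)) (by fun_prop)
  rw [Measure.map_apply hdm hA, Measure.prod_apply_symm (hdm hA)]
  have h1 : ∀ v : Fin n → ℝ, (Measure.pi fun _ : Fin n => gaussianReal 0 1)
      ((fun u => (u, v)) ⁻¹' ((fun p : (Fin n → ℝ) × (Fin n → ℝ) =>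
        lam * (p.1 ⬝ᵥ p.2)) ⁻¹' A)) =
      gaussianReal 0 (Real.toNNReal (lam ^ 2 * ∑ i, v i ^ 2)) A := by
    intro v
    rw [← aux_law lam v, Measure.map_apply (by unfold dotProduct; fun_prop) hA]
    rfl
  simp_rw [h1]
  rw [aux_radial n hn (fun q : ℝ => gaussianReal 0 (Real.toNNReal (lam ^ 2 * q)) A) hfm,
    withDensity_apply _ hA]
  have h2 : ∀ r ∈ Set.Ioi (0 : ℝ), ENNReal.ofReal (r ^ (n - 1)) *
        (ENNReal.ofReal ((2 * π) ^ (-((n : ℝ) / 2)) * Real.exp (-r ^ 2 / 2)) *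
          gaussianReal 0 (Real.toNNReal (lam ^ 2 * r ^ 2)) A) =
      ∫⁻ s in A, ENNReal.ofReal (r ^ (n - 1)) *
        (ENNReal.ofReal ((2 * π) ^ (-((n : ℝ) / 2)) * Real.exp (-r ^ 2 / 2)) *
          gaussianPDF 0 (Real.toNNReal (lam ^ 2 * r ^ 2)) s) := by
    intro r hr
    have hr : 0 < r := hr
    have hne : Real.toNNReal (lam ^ 2 * r ^ 2) ≠ 0 := by
      rw [ne_eq, Real.toNNReal_eq_zero, not_le]; positivity
    rw [gaussianReal_apply _ hne, lintegral_const_mul _ (by fun_prop),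
      lintegral_const_mul _ (by fun_prop)]
  rw [setLIntegral_congr_fun measurableSet_Ioi h2, lintegral_lintegral_swap (by fun_prop),
    ← lintegral_const_mul _ ?_]
  · refine lintegral_congr_ae (ae_restrict_of_ae ?_)
    filter_upwards [compl_mem_ae_iff.mpr (measure_singleton (0 : ℝ))] with s hs
    exact aux_pointwise n hn lam hlam s hs
  · exact Measurable.lintegral_prod_left' (f := fun p : ℝ × ℝ => ENNReal.ofReal (p.1 ^ (n - 1)) *
        (ENNReal.ofReal ((2 * π) ^ (-((n : ℝ) / 2)) * Real.exp (-p.1 ^ 2 / 2)) *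
          gaussianPDF 0 (Real.toNNReal (lam ^ 2 * p.1 ^ 2)) p.2)) (by fun_prop)
end

section
/- Let λ > 0 and let U, V be independent standard Gaussian random vectors on ℝ². Then the law of λ U·V has density f(s) = e^{−|s|/λ}/(2λ) with respect to Lebesgue measure on ℝ, i.e. λ U·V has the Laplace distribution with scale λ. -/
open MeasureTheory ProbabilityTheory Matrix Real
open scoped ENNReal

lemma aux_gauss (a : ℝ) :
    ∫ x, Real.exp (-(a ^ 2 * x ^ 2 / 2)) ∂(gaussianReal 0 1) = √(1 / (1 + a ^ 2)) := by
  rw [integral_gaussianReal_eq_integral_smul one_ne_zero]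
  have h : ∀ x : ℝ, gaussianPDFReal 0 1 x • Real.exp (-(a ^ 2 * x ^ 2 / 2))
      = (√(2 * π))⁻¹ * Real.exp (-((1 + a ^ 2) / 2) * x ^ 2) := by
    intro x
    rw [gaussianPDFReal_def, smul_eq_mul]
    simp only [NNReal.coe_one, mul_one, sub_zero]
    rw [mul_assoc, ← Real.exp_add]
    congr 2
    ring
  simp_rw [h]
  rw [integral_const_mul, integral_gaussian, ← Real.sqrt_inv, ← Real.sqrt_mul (by positivity)]
  congr 1
  have : (1 + a ^ 2) ≠ 0 := by positivity
  field_simp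

lemma aux_inner (a : ℝ) (u : Fin 2 → ℝ) :
    ∫ v : Fin 2 → ℝ, Complex.exp ((a * (u ⬝ᵥ v) : ℝ) * Complex.I)
      ∂(Measure.pi fun _ => gaussianReal 0 1)
    = ∏ i, ((Real.exp (-(a ^ 2 * (u i) ^ 2 / 2)) : ℝ) : ℂ) := by
  have h : ∀ v : Fin 2 → ℝ, Complex.exp ((a * (u ⬝ᵥ v) : ℝ) * Complex.I)
      = ∏ i, Complex.exp ((a * u i : ℝ) * (v i) * Complex.I) := by
    intro v
    simp only [dotProduct, Fin.sum_univ_two, Fin.prod_univ_two, ← Complex.exp_add]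
    congr 1
    push_cast
    ring
  simp_rw [h]
  rw [integral_fintype_prod_eq_prod
    (f := fun i (x : ℝ) => Complex.exp ((a * u i : ℝ) * x * Complex.I))]
  refine Finset.prod_congr rfl fun i _ => ?_
  rw [← charFun_apply_real, charFun_gaussianReal, Complex.ofReal_exp]
  congr 1
  push_cast
  ring

lemma aux_double (a : ℝ) :
    ∫ p : (Fin 2 → ℝ) × (Fin 2 → ℝ), Complex.exp ((a * (p.1 ⬝ᵥ p.2) : ℝ) * Complex.I)
      ∂((Measure.pi fun _ => gaussianReal 0 1).prod (Measure.pi fun _ => gaussianReal 0 1))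
    = 1 / (1 + (a : ℂ) ^ 2) := by
  rw [integral_prod]
  · simp_rw [aux_inner]
    rw [integral_fintype_prod_eq_pow
      (f := fun x : ℝ => ((Real.exp (-(a ^ 2 * x ^ 2 / 2)) : ℝ) : ℂ)), integral_complex_ofReal,
      aux_gauss, Fintype.card_fin, ← Complex.ofReal_pow, Real.sq_sqrt (by positivity)]
    push_cast
    rfl
  · refine Integrable.of_bound (C := 1) ?_ ?_
    · refine Continuous.aestronglyMeasurable ?_
      simp only [dotProduct, Fin.sum_univ_two]
      fun_prop
    · exact ae_of_all _ fun p => by rw [Complex.norm_exp_ofReal_mul_I]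

lemma aux_lap_integrable (lam : ℝ) (hlam : 0 < lam) (t : ℝ) :
    Integrable (fun s : ℝ => ((Real.exp (-|s| / lam) / (2 * lam) : ℝ) : ℂ)
      * Complex.exp (t * s * Complex.I)) ∧
    ∫ s : ℝ, ((Real.exp (-|s| / lam) / (2 * lam) : ℝ) : ℂ) * Complex.exp (t * s * Complex.I)
      = 1 / (1 + ((t * lam : ℝ) : ℂ) ^ 2) := by
  have hl : (lam : ℂ) ≠ 0 := by exact_mod_cast hlam.ne'
  set f : ℝ → ℂ := fun s : ℝ => ((Real.exp (-|s| / lam) / (2 * lam) : ℝ) : ℂ)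
      * Complex.exp (t * s * Complex.I) with hf
  set b : ℂ := (1 / lam : ℝ) + t * Complex.I with hb
  set c : ℂ := -(1 / lam : ℝ) + t * Complex.I with hc
  have hbre : 0 < b.re := by simp [hb]; positivity
  have hcre : c.re < 0 := by simp [hc]; positivity
  have h1 : Set.EqOn f (fun s : ℝ => (1 / (2 * lam) : ℂ) * Complex.exp (b * s)) (Set.Iic 0) := by
    intro s hs
    simp only [hf, abs_of_nonpos (Set.mem_Iic.1 hs)]
    push_cast
    rw [div_mul_eq_mul_div, ← Complex.exp_add, div_eq_mul_inv, mul_comm, one_div]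
    congr 2
    rw [hb]; push_cast; field_simp
  have h2 : Set.EqOn f (fun s : ℝ => (1 / (2 * lam) : ℂ) * Complex.exp (c * s)) (Set.Ioi 0) := by
    intro s hs
    simp only [hf, abs_of_pos (Set.mem_Ioi.1 hs)]
    push_cast
    rw [div_mul_eq_mul_div, ← Complex.exp_add, div_eq_mul_inv, mul_comm, one_div]
    congr 2
    rw [hc]; push_cast; field_simp
  have i1 : IntegrableOn f (Set.Iic 0) :=
    IntegrableOn.congr_fun ((integrableOn_exp_mul_complex_Iic hbre 0).const_mul _) h1.symm measurableSet_Iic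
  have i2 : IntegrableOn f (Set.Ioi 0) :=
    IntegrableOn.congr_fun ((integrableOn_exp_mul_complex_Ioi hcre 0).const_mul _) h2.symm measurableSet_Ioi
  refine ⟨?_, ?_⟩
  · rw [← integrableOn_univ, ← Set.Iic_union_Ioi (a := (0 : ℝ))]
    exact i1.union i2
  · rw [← intervalIntegral.integral_Iic_add_Ioi i1 i2, setIntegral_congr_fun measurableSet_Iic h1,
      setIntegral_congr_fun measurableSet_Ioi h2, integral_const_mul, integral_const_mul,
      integral_exp_mul_complex_Iic hbre, integral_exp_mul_complex_Ioi hcre]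
    have hb0 : b ≠ 0 := fun h => by simp [h] at hbre
    have hc0 : c ≠ 0 := fun h => by simp [h] at hcre
    have hbc : -(b * c) * lam ^ 2 = 1 + ((t * lam : ℝ) : ℂ) ^ 2 := by
      rw [hb, hc]; push_cast; field_simp; ring_nf; simp; try ring
    have hbc' : c - b = - 2 / lam := by
      rw [hb, hc]; push_cast; field_simp; ring
    rw [← hbc]
    simp only [Complex.ofReal_zero, mul_zero, Complex.exp_zero]
    have : (1 : ℂ) / b + -1 / c = (c - b) / (b * c) := by field_simp; ring
    rw [← mul_add, this, hbc']
    field_simp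

/-- Let `λ > 0` and let `U, V` be independent standard Gaussian random
vectors on `ℝ²`.  Then the law of `λ U·V` has density `s ↦ e^{−|s|/λ}/(2λ)` with respect
to Lebesgue measure on `ℝ`, i.e. `λ U·V` is Laplace-distributed with scale `λ`. -/
theorem stmt_4 {Ω : Type*} [MeasurableSpace Ω] (P : Measure Ω) [IsProbabilityMeasure P]
    (lam : ℝ) (hlam : 0 < lam)
    (U V : Ω → (Fin 2 → ℝ)) (hU : Measurable U) (hV : Measurable V)
    (hUlaw : P.map U = stdGaussian (Fin 2)) (hVlaw : P.map V = stdGaussian (Fin 2))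
    (hUV : IndepFun U V P) :
    P.map (fun ω => lam * (U ω ⬝ᵥ V ω)) =
      (volume : Measure ℝ).withDensity
        (fun s => ENNReal.ofReal (Real.exp (-|s| / lam) / (2 * lam))) := by
  have : IsProbabilityMeasure (P.map (fun ω => lam * (U ω ⬝ᵥ V ω))) := by
    apply Measure.isProbabilityMeasure_map
    simp only [dotProduct, Fin.sum_univ_two]
    fun_prop
  have hint : Integrable (fun s : ℝ => Real.exp (-|s| / lam) / (2 * lam)) := by
    have := (aux_lap_integrable lam hlam 0).1.re
    refine this.congr (ae_of_all _ fun s => ?_)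
    simp only [Complex.ofReal_zero, zero_mul, Complex.exp_zero, mul_one]
    exact Complex.ofReal_re _
  have : IsFiniteMeasure ((volume : Measure ℝ).withDensity
        (fun s => ENNReal.ofReal (Real.exp (-|s| / lam) / (2 * lam)))) :=
    isFiniteMeasure_withDensity_ofReal hint.2
  refine Measure.ext_of_charFun (funext fun t => ?_)
  rw [charFun_apply_real, charFun_apply_real]
  trans 1 / (1 + ((t * lam : ℝ) : ℂ) ^ 2)
  · rw [← aux_double]
    have hlaw := hUV.map_prod_eq_prod_map_map hU.aemeasurable hV.aemeasurable
    rw [hUlaw, hVlaw] at hlaw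
    unfold _root_.stdGaussian at hlaw
    rw [← hlaw, integral_map, integral_map]
    · congr 1
      funext ω
      congr 1
      push_cast
      ring
    · fun_prop
    · refine Continuous.aestronglyMeasurable ?_
      simp only [dotProduct, Fin.sum_univ_two]
      fun_prop
    · simp only [dotProduct, Fin.sum_univ_two]
      fun_prop
    · refine Continuous.aestronglyMeasurable ?_
      fun_prop
  · rw [← (aux_lap_integrable lam hlam t).2, integral_withDensity_eq_integral_toReal_smul
      (by fun_prop) (ae_of_all _ fun _ => ENNReal.ofReal_lt_top)]
    congr 1
    funext s
    rw [ENNReal.toReal_ofReal (by positivity), Complex.real_smul]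
end
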